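/- Let M be a 3×3 real symmetric matrix and a, b, m₀ real numbers with 0 < a, a‖u‖² ≤ uᵀMu ≤ b‖u‖² for all u ∈ ℝ³, and a ≤ m₀ ≤ b. Let K_r be a 4×4 real symmetric matrix and k > 0 with k‖v‖² ≤ vᵀK_r v for all v ∈ ℝ⁴. Let q : [t₀,∞) → ℝ⁴ be differentiable with ‖q(t)‖ = 1 for all t ≥ t₀, and let s : [t₀,∞) → ℝ⁴ be differentiable and satisfy the closed-loop sliding dynamics D(q(t))ṡ(t) = −C(q(t), q̇(t))s(t) − K_r s(t) for all t ≥ t₀. Then for all t ≥ t₀, ‖s(t)‖ ≤ (b/a)^{1/2} ‖s(t₀)‖ exp(−(k/b)(t − t₀)); in particular, s(t) → 0 exponentially. -/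

import Mathlib

/-!
The matrix `Q(x)` is left multiplication by the quaternion `x`, so `Q(q)` is orthogonal for unit `q`,
and `D(q) = Q(q) N Q(q)ᵀ` with `N = diag(m₀, M)` (`Dmat_eq`). In the body coordinates `y = Q(q)ᵀ s` the
energy is `V = sᵀ D(q) s = yᵀ N y`, hence `a‖s‖² ≤ V ≤ b‖s‖²`. Differentiating the orthogonality of
`Q(q)` gives `Q(q)ᵀ Q(q̇) Q(q)ᵀ = -Q(q̇)ᵀ` (`Qmat_skew`), while the gyroscopic term `(Mω)^∧` does no work;
together they yield the passivity identity `V̇ = -2 sᵀ K_r s` (`energy_balance`). Therefore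
`V̇ ≤ -(2k/b) V`, so `V · exp((2k/b)(t - t₀))` is nonincreasing, which is the claimed bound.
-/

open Matrix

noncomputable section

/-- Cross-product (hat) matrix of a 3-vector: `vecHat v *ᵥ u = v ×₃ u`. -/
def vecHat (v : Fin 3 → ℝ) : Matrix (Fin 3) (Fin 3) ℝ :=
  !![0, -v 2, v 1; v 2, 0, -v 0; -v 1, v 0, 0]

/-- The 4×3 matrix J(x): first row −x⃗ᵀ, lower 3×3 block x₀I₃ + x⃗^∧. -/
def Jmat (x : Fin 4 → ℝ) : Matrix (Fin 4) (Fin 3) ℝ :=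
  Matrix.of fun i j =>
    if h : i = 0 then -x j.succ
    else (x 0 • (1 : Matrix (Fin 3) (Fin 3) ℝ) + vecHat fun k => x k.succ) (i.pred h) j

/-- The 4×3 matrix L(x): first row −x⃗ᵀ, lower 3×3 block x₀I₃ − x⃗^∧. -/
def Lmat (x : Fin 4 → ℝ) : Matrix (Fin 4) (Fin 3) ℝ :=
  Matrix.of fun i j =>
    if h : i = 0 then -x j.succ
    else (x 0 • (1 : Matrix (Fin 3) (Fin 3) ℝ) - vecHat fun k => x k.succ) (i.pred h) j

/-- The 4×4 matrix Q(x) = [x J(x)] (first column x, remaining columns J(x)). -/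
def Qmat (x : Fin 4 → ℝ) : Matrix (Fin 4) (Fin 4) ℝ :=
  Matrix.of fun i j => if h : j = 0 then x i else Jmat x i (j.pred h)

/-- The 4×4 matrix W(x) = [x L(x)] (first column x, remaining columns L(x)). -/
def Wmat (x : Fin 4 → ℝ) : Matrix (Fin 4) (Fin 4) ℝ :=
  Matrix.of fun i j => if h : j = 0 then x i else Lmat x i (j.pred h)

/-- Euclidean norm on ℝ⁴: ‖x‖ = (xᵀx)^{1/2}. -/
def norm4 (x : Fin 4 → ℝ) : ℝ := Real.sqrt (x ⬝ᵥ x)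

/-- The identity quaternion 1̄ = (1,0,0,0) ∈ ℝ⁴. -/
def one4 : Fin 4 → ℝ := ![1, 0, 0, 0]

/-- Inertia-type matrix D(q) = J(q) M Jᵀ(q) + m₀ q qᵀ. -/
def Dmat (M : Matrix (Fin 3) (Fin 3) ℝ) (m₀ : ℝ) (q : Fin 4 → ℝ) :
    Matrix (Fin 4) (Fin 4) ℝ :=
  Jmat q * M * (Jmat q)ᵀ + m₀ • vecMulVec q q

/-- Coriolis-type matrix C(q,q̇) = −J(q)(Mω)^∧Jᵀ(q) − D(q)Q(q̇)Qᵀ(q), ω = 2Jᵀ(q)q̇. -/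
def Cmat (M : Matrix (Fin 3) (Fin 3) ℝ) (m₀ : ℝ) (q qd : Fin 4 → ℝ) :
    Matrix (Fin 4) (Fin 4) ℝ :=
  -(Jmat q * vecHat (M *ᵥ ((2 : ℝ) • ((Jmat q)ᵀ *ᵥ qd))) * (Jmat q)ᵀ)
    - Dmat M m₀ q * Qmat qd * (Qmat q)ᵀ

/-- The constant block matrix `diag(m₀, M)`: the matrix of `D(q)` in body coordinates. -/
def bodyInertia (M : Matrix (Fin 3) (Fin 3) ℝ) (m₀ : ℝ) : Matrix (Fin 4) (Fin 4) ℝ :=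
  Matrix.of (Fin.cons (Fin.cons m₀ 0) fun i => Fin.cons 0 (M i))

lemma Qmat_eq (x : Fin 4 → ℝ) : Qmat x =
    !![x 0, -x 1, -x 2, -x 3; x 1, x 0, -x 3, x 2; x 2, x 3, x 0, -x 1; x 3, -x 2, x 1, x 0] := by
  ext i j
  fin_cases i <;> fin_cases j <;>
    simp [Qmat, Jmat, vecHat, Fin.pred, Fin.subNat, Fin.succ, Matrix.one_apply]

lemma Qmat_mul_transpose_add (x y : Fin 4 → ℝ) :
    Qmat x * (Qmat y)ᵀ + Qmat y * (Qmat x)ᵀ = (2 * (x ⬝ᵥ y)) • (1 : Matrix (Fin 4) (Fin 4) ℝ) := by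
  ext i j
  simp only [Qmat_eq, Matrix.add_apply, Matrix.smul_apply, Matrix.transpose_apply,
    Matrix.mul_apply, Fin.sum_univ_four, dotProduct]
  fin_cases i <;> fin_cases j <;>
    simp <;> ring

lemma Qmat_transpose_mul (x : Fin 4 → ℝ) :
    (Qmat x)ᵀ * Qmat x = (x ⬝ᵥ x) • (1 : Matrix (Fin 4) (Fin 4) ℝ) := by
  ext i j
  simp only [Qmat_eq, Matrix.smul_apply, Matrix.transpose_apply,
    Matrix.mul_apply, Fin.sum_univ_four, dotProduct]
  fin_cases i <;> fin_cases j <;>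
    simp <;> ring

lemma Dmat_eq (M : Matrix (Fin 3) (Fin 3) ℝ) (m₀ : ℝ) (q : Fin 4 → ℝ) :
    Dmat M m₀ q = Qmat q * bodyInertia M m₀ * (Qmat q)ᵀ := by
  ext i j
  simp only [Dmat, bodyInertia, Matrix.add_apply, Matrix.mul_apply, Matrix.smul_apply,
    vecMulVec_apply, Matrix.transpose_apply, Fin.sum_univ_succ (n := 3), Matrix.of_apply]
  simp [Qmat]
  ring

lemma bodyInertia_quad (M : Matrix (Fin 3) (Fin 3) ℝ) (m₀ : ℝ) (y : Fin 4 → ℝ) :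
    y ⬝ᵥ (bodyInertia M m₀ *ᵥ y) =
      m₀ * (y 0 * y 0) + Fin.tail y ⬝ᵥ (M *ᵥ Fin.tail y) := by
  simp [dotProduct, mulVec, bodyInertia, Fin.sum_univ_succ (n := 3), Fin.tail]
  ring

lemma bodyInertia_transpose {M : Matrix (Fin 3) (Fin 3) ℝ} (hM : Mᵀ = M) (m₀ : ℝ) :
    (bodyInertia M m₀)ᵀ = bodyInertia M m₀ := by
  ext i j
  refine Fin.cases ?_ (fun i => ?_) i <;> refine Fin.cases ?_ (fun j => ?_) j <;>
    simp [bodyInertia]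
  exact congrFun (congrFun hM i) j

lemma dot_tail (y : Fin 4 → ℝ) : y ⬝ᵥ y = y 0 * y 0 + Fin.tail y ⬝ᵥ Fin.tail y := by
  simp [dotProduct, Fin.sum_univ_succ (n := 3), Fin.tail]

lemma dot_vecHat (v u : Fin 3 → ℝ) : u ⬝ᵥ (vecHat v *ᵥ u) = 0 := by
  simp [vecHat, dotProduct, mulVec, Fin.sum_univ_three]
  ring

/-- `Q(q)ᵀ Q(q̇)` is skew when `q̇` is tangent to the unit sphere at `q`;
stated after right multiplication by the orthogonal matrix `Q(q)ᵀ`. -/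
lemma Qmat_skew {q qd : Fin 4 → ℝ} (h1 : q ⬝ᵥ q = 1) (h0 : q ⬝ᵥ qd = 0) :
    (Qmat q)ᵀ * Qmat qd * (Qmat q)ᵀ = -(Qmat qd)ᵀ := by
  have h := Qmat_mul_transpose_add q qd
  rw [h0, mul_zero, zero_smul] at h
  rw [Matrix.mul_assoc, eq_neg_of_add_eq_zero_right h, Matrix.mul_neg, ← Matrix.mul_assoc,
    Qmat_transpose_mul, h1, one_smul, Matrix.one_mul]

lemma dot_conj (A B : Matrix (Fin 4) (Fin 4) ℝ) (s w : Fin 4 → ℝ) :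
    s ⬝ᵥ ((A * B) *ᵥ w) = (Aᵀ *ᵥ s) ⬝ᵥ (B *ᵥ w) := by
  rw [← Matrix.mulVec_mulVec, Matrix.dotProduct_mulVec, Matrix.mulVec_transpose]

/-- The Coriolis term pairs with `s` exactly as the rotation of the body frame does. -/
lemma dot_Cmat (M : Matrix (Fin 3) (Fin 3) ℝ) (m₀ : ℝ) {q qd : Fin 4 → ℝ} (s : Fin 4 → ℝ)
    (h1 : q ⬝ᵥ q = 1) (h0 : q ⬝ᵥ qd = 0) :
    s ⬝ᵥ (Cmat M m₀ q qd *ᵥ s) =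
      ((Qmat q)ᵀ *ᵥ s) ⬝ᵥ (bodyInertia M m₀ *ᵥ ((Qmat qd)ᵀ *ᵥ s)) := by
  have hg : ∀ v, s ⬝ᵥ ((Jmat q * vecHat v * (Jmat q)ᵀ) *ᵥ s) = 0 := fun v => by
    rw [← Matrix.mulVec_mulVec, ← Matrix.mulVec_mulVec, Matrix.dotProduct_mulVec,
      ← Matrix.mulVec_transpose, dot_vecHat]
  have hD : Dmat M m₀ q * Qmat qd * (Qmat q)ᵀ =
      -(Qmat q * (bodyInertia M m₀ * (Qmat qd)ᵀ)) := by
    rw [Dmat_eq, ← Matrix.mul_neg, ← Matrix.mul_neg, ← Qmat_skew h1 h0]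
    simp only [Matrix.mul_assoc]
  rw [Cmat, Matrix.sub_mulVec, Matrix.neg_mulVec, dotProduct_sub, dotProduct_neg, hg, hD,
    Matrix.neg_mulVec, dotProduct_neg, dot_conj, ← Matrix.mulVec_mulVec]
  ring

/-- Passivity: the left-hand side is half the time derivative of the energy `yᵀ N y`, `y = Q(q)ᵀ s`. -/
lemma energy_balance (M Kr) (m₀ : ℝ) {q qd s sd : Fin 4 → ℝ}
    (h1 : q ⬝ᵥ q = 1) (h0 : q ⬝ᵥ qd = 0)
    (hdyn : Dmat M m₀ q *ᵥ sd = -(Cmat M m₀ q qd *ᵥ s) - Kr *ᵥ s) :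
    ((Qmat q)ᵀ *ᵥ s) ⬝ᵥ (bodyInertia M m₀ *ᵥ ((Qmat qd)ᵀ *ᵥ s + (Qmat q)ᵀ *ᵥ sd)) =
      -(s ⬝ᵥ (Kr *ᵥ s)) := by
  have h := congrArg (fun w => s ⬝ᵥ w) hdyn
  simp only [dotProduct_sub, dotProduct_neg, dot_Cmat M m₀ s h1 h0] at h
  rw [Dmat_eq, Matrix.mul_assoc, dot_conj, ← Matrix.mulVec_mulVec] at h
  rw [Matrix.mulVec_add, dotProduct_add, h]
  ring

lemma hasDerivWithinAt_dot {u v : ℝ → Fin 4 → ℝ} {u' v' : Fin 4 → ℝ} {S : Set ℝ} {t : ℝ}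
    (hu : HasDerivWithinAt u u' S t) (hv : HasDerivWithinAt v v' S t) :
    HasDerivWithinAt (fun τ => u τ ⬝ᵥ v τ) (u' ⬝ᵥ v t + u t ⬝ᵥ v') S t := by
  rw [hasDerivWithinAt_pi] at hu hv
  have := HasDerivWithinAt.fun_sum (u := Finset.univ) fun i _ => (hu i).fun_mul (hv i)
  rw [Finset.sum_add_distrib] at this
  exact this

lemma hasDerivWithinAt_Qmat {q : ℝ → Fin 4 → ℝ} {q' : Fin 4 → ℝ} {S : Set ℝ} {t : ℝ}
    (hq : HasDerivWithinAt q q' S t) (i : Fin 4) :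
    HasDerivWithinAt (fun τ => (Qmat (q τ))ᵀ i) ((Qmat q')ᵀ i) S t := by
  rw [hasDerivWithinAt_pi] at hq ⊢
  intro j
  simp only [Qmat_eq]
  fin_cases i <;> fin_cases j <;> simp <;>
    first
    | exact hq _
    | exact (hq _).fun_neg

lemma hasDerivWithinAt_body {q s : ℝ → Fin 4 → ℝ} {q' s' : Fin 4 → ℝ} {S : Set ℝ} {t : ℝ}
    (hq : HasDerivWithinAt q q' S t) (hs : HasDerivWithinAt s s' S t) :
    HasDerivWithinAt (fun τ => (Qmat (q τ))ᵀ *ᵥ s τ)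
      ((Qmat q')ᵀ *ᵥ s t + (Qmat (q t))ᵀ *ᵥ s') S t :=
  hasDerivWithinAt_pi.2 fun i => hasDerivWithinAt_dot (hasDerivWithinAt_Qmat hq i) hs

lemma hasDerivWithinAt_quad {N : Matrix (Fin 4) (Fin 4) ℝ} (hN : Nᵀ = N)
    {y : ℝ → Fin 4 → ℝ} {y' : Fin 4 → ℝ} {S : Set ℝ} {t : ℝ}
    (hy : HasDerivWithinAt y y' S t) :
    HasDerivWithinAt (fun τ => y τ ⬝ᵥ (N *ᵥ y τ)) (2 * (y t ⬝ᵥ (N *ᵥ y'))) S t := by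
  have hNy : HasDerivWithinAt (fun τ => N *ᵥ y τ) (N *ᵥ y') S t := by
    refine hasDerivWithinAt_pi.2 fun i => ?_
    have h := hasDerivWithinAt_dot (hasDerivWithinAt_const t S (N i)) hy
    rw [zero_dotProduct, zero_add] at h
    exact h
  convert hasDerivWithinAt_dot hy hNy using 1
  rw [dotProduct_comm y' (N *ᵥ y t), Matrix.dotProduct_mulVec (y t), ← Matrix.mulVec_transpose, hN]
  ring

/-- Global exponential stability of the sliding dynamics
D(q)ṡ = −C(q,q̇)s − K_r s:  ‖s(t)‖ ≤ (b/a)^{1/2}‖s(t₀)‖ e^{−(k/b)(t−t₀)}. -/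
theorem stmt19 (M : Matrix (Fin 3) (Fin 3) ℝ) (hM : Mᵀ = M)
    (a b m₀ : ℝ) (ha : 0 < a)
    (hMa : ∀ u : Fin 3 → ℝ, a * (u ⬝ᵥ u) ≤ u ⬝ᵥ (M *ᵥ u))
    (hMb : ∀ u : Fin 3 → ℝ, u ⬝ᵥ (M *ᵥ u) ≤ b * (u ⬝ᵥ u))
    (ham₀ : a ≤ m₀) (hm₀b : m₀ ≤ b)
    (Kr : Matrix (Fin 4) (Fin 4) ℝ) (hKr : Krᵀ = Kr) (k : ℝ) (hk : 0 < k)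
    (hKrk : ∀ v : Fin 4 → ℝ, k * (v ⬝ᵥ v) ≤ v ⬝ᵥ (Kr *ᵥ v))
    (t₀ : ℝ) (q s qd sd : ℝ → Fin 4 → ℝ)
    (hq : ∀ t ≥ t₀, HasDerivWithinAt q (qd t) (Set.Ici t₀) t)
    (hs : ∀ t ≥ t₀, HasDerivWithinAt s (sd t) (Set.Ici t₀) t)
    (hnorm : ∀ t ≥ t₀, norm4 (q t) = 1)
    (hdyn : ∀ t ≥ t₀, Dmat M m₀ (q t) *ᵥ sd t =
      -(Cmat M m₀ (q t) (qd t) *ᵥ s t) - Kr *ᵥ s t) :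
    ∀ t ≥ t₀, norm4 (s t) ≤
      Real.sqrt (b / a) * norm4 (s t₀) * Real.exp (-(k / b) * (t - t₀)) := by
  have hsq : ∀ τ ≥ t₀, q τ ⬝ᵥ q τ = 1 := fun τ hτ => Real.sqrt_eq_one.1 (hnorm τ hτ)
  have horth : ∀ τ ≥ t₀, q τ ⬝ᵥ qd τ = 0 := by
    intro τ hτ
    have h := hasDerivWithinAt_dot (hq τ hτ) (hq τ hτ)
    have hc : HasDerivWithinAt (fun τ => q τ ⬝ᵥ q τ) 0 (Set.Ici t₀) τ :=
      (hasDerivWithinAt_const τ _ (1 : ℝ)).congr (fun x hx => hsq x hx) (hsq τ hτ)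
    have he := (uniqueDiffOn_Ici t₀ τ hτ).eq_deriv _ h hc
    rw [dotProduct_comm (qd τ)] at he
    linarith
  have hb : 0 < b := ha.trans_le (ham₀.trans hm₀b)
  set N := bodyInertia M m₀ with hN
  set y : ℝ → Fin 4 → ℝ := fun τ => (Qmat (q τ))ᵀ *ᵥ s τ with hy
  set V : ℝ → ℝ := fun τ => y τ ⬝ᵥ (N *ᵥ y τ) with hV
  have hyy : ∀ τ ≥ t₀, y τ ⬝ᵥ y τ = s τ ⬝ᵥ s τ := by
    intro τ hτ
    have h := Qmat_mul_transpose_add (q τ) (q τ)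
    rw [hsq τ hτ, mul_one, ← two_smul ℝ (Qmat (q τ) * (Qmat (q τ))ᵀ)] at h
    have h' : Qmat (q τ) * (Qmat (q τ))ᵀ = 1 := smul_right_injective _ (two_ne_zero' ℝ) h
    rw [hy, ← dot_conj, h', Matrix.one_mulVec]
  have hVa : ∀ τ ≥ t₀, a * (s τ ⬝ᵥ s τ) ≤ V τ := by
    intro τ hτ
    rw [← hyy τ hτ, hV, dot_tail]
    simp only [hN, bodyInertia_quad]
    nlinarith [hMa (Fin.tail (y τ)), mul_self_nonneg (y τ 0)]
  have hVb : ∀ τ ≥ t₀, V τ ≤ b * (s τ ⬝ᵥ s τ) := by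
    intro τ hτ
    rw [← hyy τ hτ, hV, dot_tail]
    simp only [hN, bodyInertia_quad]
    nlinarith [hMb (Fin.tail (y τ)), mul_self_nonneg (y τ 0)]
  have hVd : ∀ τ ≥ t₀,
      HasDerivWithinAt V (-2 * (s τ ⬝ᵥ (Kr *ᵥ s τ))) (Set.Ici t₀) τ := by
    intro τ hτ
    have h := hasDerivWithinAt_quad (bodyInertia_transpose hM m₀)
      (hasDerivWithinAt_body (hq τ hτ) (hs τ hτ))
    rw [energy_balance M Kr m₀ (hsq τ hτ) (horth τ hτ) (hdyn τ hτ)] at h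
    convert h using 1
    ring
  -- The rate `2k/b` comes from `V̇ ≤ -2k‖s‖²` and `V ≤ b‖s‖²`.
  set c := 2 * (k / b) with hc
  have hgd : ∀ τ ≥ t₀, HasDerivWithinAt (fun τ => V τ * Real.exp (c * (τ - t₀)))
      (-2 * (s τ ⬝ᵥ (Kr *ᵥ s τ)) * Real.exp (c * (τ - t₀)) +
        V τ * (Real.exp (c * (τ - t₀)) * (c * 1))) (Set.Ici t₀) τ := fun τ hτ =>
    (hVd τ hτ).fun_mul
      ((((hasDerivAt_id τ).sub_const t₀).const_mul c).exp).hasDerivWithinAt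
  have hanti : AntitoneOn (fun τ => V τ * Real.exp (c * (τ - t₀))) (Set.Ici t₀) := by
    refine antitoneOn_of_hasDerivWithinAt_nonpos (convex_Ici t₀)
      (fun τ hτ => (hgd τ hτ).continuousWithinAt)
      (fun τ hτ => (hgd τ (interior_subset hτ)).mono interior_subset) fun τ hτ => ?_
    have hτ' : τ ≥ t₀ := interior_subset hτ
    have hcV : c * V τ ≤ 2 * (s τ ⬝ᵥ (Kr *ᵥ s τ)) := by
      calc c * V τ ≤ c * (b * (s τ ⬝ᵥ s τ)) :=
            mul_le_mul_of_nonneg_left (hVb τ hτ') (by positivity)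
        _ = 2 * (k * (s τ ⬝ᵥ s τ)) := by rw [hc]; field_simp
        _ ≤ _ := by linarith [hKrk (s τ)]
    nlinarith [Real.exp_pos (c * (τ - t₀))]
  intro t ht
  have hdecay : V t * Real.exp (c * (t - t₀)) ≤ V t₀ := by
    simpa using hanti (Set.self_mem_Ici) ht ht
  have hexp : Real.exp (c * (t - t₀)) * Real.exp (-(k / b) * (t - t₀)) ^ 2 = 1 := by
    rw [← Real.exp_nat_mul, ← Real.exp_add, Real.exp_eq_one_iff, hc]
    push_cast
    ring
  set e := Real.exp (-(k / b) * (t - t₀)) with he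
  have hepos : 0 < e := Real.exp_pos _
  have hmain : a * (s t ⬝ᵥ s t) ≤ b * (s t₀ ⬝ᵥ s t₀) * e ^ 2 :=
    calc a * (s t ⬝ᵥ s t) ≤ V t := hVa t ht
      _ = V t * Real.exp (c * (t - t₀)) * e ^ 2 := by rw [mul_assoc, hexp, mul_one]
      _ ≤ b * (s t₀ ⬝ᵥ s t₀) * e ^ 2 :=
        mul_le_mul_of_nonneg_right (hdecay.trans (hVb t₀ le_rfl)) (by positivity)
  unfold norm4
  rw [← Real.sqrt_mul (by positivity), ← Real.sqrt_sq hepos.le, ← Real.sqrt_mul' _ (by positivity)]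
  refine Real.sqrt_le_sqrt ?_
  rw [div_mul_eq_mul_div, div_mul_eq_mul_div, le_div_iff₀ ha]
  linarith
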